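/- Sard-type partition lemma (Lemma l3.3). There exist an integer m ≥ 1, pairwise disjoint sets 𝒟′₁, …, 𝒟′_m with 𝒟′ = ⋃_{l=1}^m 𝒟′_l, and numbers ν₁, …, ν_m ∈ (ν, 3ν/2) such that for every l ∈ {1,…,m} and every (z, w) in the closure of 𝒟′_l, zero is a regular value of the function v ↦ F(z, w + v) − ν_l on the closure of O; that is, for every v in the closure of O with F(z, w + v) = ν_l, the derivative of the map v ↦ F(z, w + v) at v is nonzero. -/

import Mathlib

open Set

section SardAux
open scoped ContDiff Topology NNReal ENNReal
open MeasureTheory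

lemma sard_taylor {V : Type*} [NormedAddCommGroup V] [NormedSpace ℝ V]
    {f : V → ℝ} {B : Set V} (hB : Convex ℝ B) (hf : ∀ y ∈ B, ContDiffAt ℝ ∞ f y) (n : ℕ) (C : ℝ)
    (hC : ∀ y ∈ B, ‖iteratedFDeriv ℝ (n+1) f y‖ ≤ C) {x : V} (hx : x ∈ B)
    (hx0 : ∀ j, 1 ≤ j → j ≤ n → iteratedFDeriv ℝ j f x = 0) {y : V} (hy : y ∈ B) :
    ‖f y - f x‖ ≤ C * ‖y - x‖ ^ (n+1) := by
  have hC0 : 0 ≤ C := (norm_nonneg _).trans (hC x hx)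
  have hdiff : ∀ j, ∀ y ∈ B, DifferentiableAt ℝ (iteratedFDeriv ℝ j f) y := fun j y hy =>
    ((hf y hy).iteratedFDeriv_right (m := 1) (i := j) (by exact_mod_cast le_top)).differentiableAt
      (by simp)
  have key : ∀ i, i ≤ n → ∀ y ∈ B, ‖iteratedFDeriv ℝ (n+1-i) f y‖ ≤ C * ‖y - x‖ ^ i := by
    intro i
    induction i with
    | zero => intro _ y hy; simpa using hC y hy
    | succ i ih =>
      intro hi y hy
      have e : n + 1 - i = (n + 1 - (i+1)) + 1 := by omega
      have h := (hB.inter (convex_closedBall x ‖y-x‖)).norm_image_sub_le_of_norm_fderiv_le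
        (𝕜 := ℝ) (f := iteratedFDeriv ℝ (n+1-(i+1)) f) (C := C * ‖y-x‖^i)
        (fun z hz => hdiff _ z hz.1)
        (fun z hz => by
          rw [norm_fderiv_iteratedFDeriv, ← e]
          refine (ih (by omega) z hz.1).trans ?_
          have := hz.2
          rw [mem_closedBall_iff_norm] at this
          gcongr)
        (x := x) (y := y) ⟨hx, by simp⟩ ⟨hy, by simp [dist_eq_norm]⟩
      rw [hx0 _ (by omega) (by omega), sub_zero] at h
      rw [pow_succ, ← mul_assoc]
      exact h
  have h := (hB.inter (convex_closedBall x ‖y-x‖)).norm_image_sub_le_of_norm_fderiv_le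
        (𝕜 := ℝ) (f := f) (C := C * ‖y-x‖^n)
        (fun z hz => (hf z hz.1).differentiableAt (by simp))
        (fun z hz => by
          have h1 := key n le_rfl z hz.1
          have e : n + 1 - n = 1 := by omega
          rw [e, norm_iteratedFDeriv_one] at h1
          refine h1.trans ?_
          have := hz.2
          rw [mem_closedBall_iff_norm] at this
          gcongr)
        (x := x) (y := y) ⟨hx, by simp⟩ ⟨hy, by simp [dist_eq_norm]⟩
  rw [pow_succ, ← mul_assoc]
  exact h

lemma sard_flat {V : Type*} [NormedAddCommGroup V] [NormedSpace ℝ V] [FiniteDimensional ℝ V]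
    {f : V → ℝ} {U : Set V} (hU : IsOpen U) (hf : ContDiffOn ℝ ∞ f U) :
    volume (f '' {x ∈ U | ∀ j, 1 ≤ j → j ≤ Module.finrank ℝ V → iteratedFDeriv ℝ j f x = 0}) = 0 := by
  set n := Module.finrank ℝ V with hn
  set S := {x ∈ U | ∀ j, 1 ≤ j → j ≤ n → iteratedFDeriv ℝ j f x = 0} with hS
  have hd : dimH (f '' S) ≤ dimH S / ((n+1 : ℕ) : ℝ≥0) := by
    apply dimH_image_le_of_locally_holder_on
    · positivity
    intro x hx
    have hcd : ∀ y ∈ U, ContDiffAt ℝ ∞ f y := fun y hy => hf.contDiffAt (hU.mem_nhds hy)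
    have hc : ContinuousAt (iteratedFDeriv ℝ (n+1) f) x :=
      ((hcd x hx.1).iteratedFDeriv_right (m := 0) (i := n+1) (by exact_mod_cast le_top)).continuousAt
    have hev : ∀ᶠ y in 𝓝 x, y ∈ U ∧ ‖iteratedFDeriv ℝ (n+1) f y‖ < ‖iteratedFDeriv ℝ (n+1) f x‖ + 1 :=
      (hU.eventually_mem hx.1).and (hc.norm.eventually_lt_const (by linarith))
    obtain ⟨r, hr, hball⟩ := Metric.eventually_nhds_iff_ball.1 hev
    refine ⟨(‖iteratedFDeriv ℝ (n+1) f x‖ + 1).toNNReal, S ∩ Metric.ball x r,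
      Filter.inter_mem self_mem_nhdsWithin (mem_nhdsWithin_of_mem_nhds (Metric.ball_mem_nhds x hr)), ?_⟩
    intro a ha b hb
    have h := sard_taylor (convex_ball x r) (fun y hy => hcd y (hball y hy).1) n
      (‖iteratedFDeriv ℝ (n+1) f x‖ + 1) (fun y hy => (hball y hy).2.le) hb.2 hb.1.2 ha.2
    rw [edist_dist, edist_dist, dist_eq_norm, dist_eq_norm]
    rw [NNReal.coe_natCast, ENNReal.rpow_natCast, ← ENNReal.ofReal_pow (norm_nonneg _),
      ENNReal.coe_nnreal_eq, Real.coe_toNNReal _ (by positivity), ← ENNReal.ofReal_mul (by positivity)]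
    exact ENNReal.ofReal_le_ofReal h
  have h1 : dimH (f '' S) < ((1 : ℝ≥0) : ℝ≥0∞) := by
    refine hd.trans_lt ?_
    have : dimH S ≤ n := (dimH_mono (subset_univ S)).trans (by rw [Real.dimH_univ_eq_finrank])
    refine (ENNReal.div_le_div_right this _).trans_lt ?_
    rw [ENNReal.div_lt_iff (by simp) (by simp)]
    simp only [ENNReal.coe_one, one_mul, ENNReal.coe_natCast]
    exact_mod_cast Nat.lt_succ_self n
  have := hausdorffMeasure_of_dimH_lt h1
  simpa [hausdorffMeasure_real] using this

/-- hypersurface step -/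
lemma sard_hyper {V : Type*} [NormedAddCommGroup V] [NormedSpace ℝ V] [FiniteDimensional ℝ V]
    {f g : V → ℝ} {U : Set V} (hU : IsOpen U) (hf : ContDiffOn ℝ ∞ f U)
    (hg : ContDiffOn ℝ ∞ g U) {x : V} (hx : x ∈ U) (hgx : fderiv ℝ g x ≠ 0)
    (IH : ∀ (W : Submodule ℝ V), Module.finrank ℝ W < Module.finrank ℝ V →
      ∀ (h : W → ℝ) (U' : Set W), IsOpen U' → ContDiffOn ℝ ∞ h U' →
        volume (h '' {u ∈ U' | fderiv ℝ h u = 0}) = 0) :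
    ∃ N ∈ 𝓝 x, volume (f '' {y ∈ N | g y = 0 ∧ fderiv ℝ f y = 0}) = 0 := by
  have hfc : ∀ y ∈ U, ContDiffAt ℝ ∞ f y := fun y hy => hf.contDiffAt (hU.mem_nhds hy)
  have hgc : ∀ y ∈ U, ContDiffAt ℝ ∞ g y := fun y hy => hg.contDiffAt (hU.mem_nhds hy)
  set L := fderiv ℝ g x with hL
  obtain ⟨v, hv⟩ : ∃ v, L v = 1 := by
    obtain ⟨v, hv⟩ : ∃ v, L v ≠ 0 := by
      by_contra! h
      exact hgx (ContinuousLinearMap.ext h)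
    exact ⟨(L v)⁻¹ • v, by simp [hv]⟩
  let Φ : V → V := fun y => y + (g y - L y) • v
  have hΦc : ∀ y ∈ U, ContDiffAt ℝ ∞ Φ y := fun y hy =>
    contDiffAt_id.add (((hgc y hy).sub L.contDiff.contDiffAt).smul contDiffAt_const)
  have hLΦ : ∀ y, L (Φ y) = g y := fun y => by simp [Φ, hv]
  have hΦ' : HasFDerivAt Φ ((ContinuousLinearEquiv.refl ℝ V : V ≃L[ℝ] V) : V →L[ℝ] V) x := by
    have h1 : HasFDerivAt g L x := ((hgc x hx).differentiableAt (by simp)).hasFDerivAt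
    have h2 := (hasFDerivAt_id (𝕜 := ℝ) x).add ((h1.sub L.hasFDerivAt).smul_const v)
    refine h2.congr_fderiv ?_
    ext w
    simp
  let e := (hΦc x hx).toOpenPartialHomeomorph Φ hΦ' (by simp)
  have heΦ : ∀ y, e y = Φ y := fun y => rfl
  have hxe : x ∈ e.source := (hΦc x hx).mem_toOpenPartialHomeomorph_source hΦ' (by simp)
  have hinv : ∀ᶠ y in 𝓝 x, fderiv ℝ Φ y ∈ range ((↑) : (V ≃L[ℝ] V) → V →L[ℝ] V) := by
    have hc : ContinuousAt (fderiv ℝ Φ) x :=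
      ((hΦc x hx).fderiv_right (m := 0) (by simp)).continuousAt
    apply hc
    rw [hΦ'.fderiv]
    exact ContinuousLinearEquiv.nhds _
  have hN : ∀ᶠ y in 𝓝 x, y ∈ U ∧ fderiv ℝ Φ y ∈ range ((↑) : (V ≃L[ℝ] V) → V →L[ℝ] V) :=
    (hU.eventually_mem hx).and hinv
  obtain ⟨N, hNsub, hNo, hxN⟩ := eventually_nhds_iff.1 hN
  let W : Submodule ℝ V := LinearMap.ker (L : V →ₗ[ℝ] ℝ)
  let T : Set V := e.target ∩ e.symm ⁻¹' N
  have hT : IsOpen T := e.isOpen_inter_preimage_symm hNo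
  let U' : Set W := (fun u : W => (u : V)) ⁻¹' T
  have hU' : IsOpen U' := hT.preimage continuous_subtype_val
  let h : W → ℝ := fun u => f (e.symm u)
  have hsymm : ∀ a ∈ T, ContDiffAt ℝ ∞ e.symm a := by
    intro a ha
    obtain ⟨hyU, ⟨A, hA⟩⟩ := hNsub _ ha.2
    refine e.contDiffAt_symm (f₀' := A) ha.1 ?_ (hΦc _ hyU)
    rw [hA]
    exact ((hΦc _ hyU).differentiableAt (by simp)).hasFDerivAt
  have hfW : ∀ u ∈ U', ContDiffAt ℝ ∞ h u := by
    intro u hu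
    have h1 : ContDiffAt ℝ ∞ (fun u : W => e.symm (u : V)) u :=
      (hsymm u hu).comp u W.subtypeL.contDiff.contDiffAt
    exact (hfc _ (hNsub _ hu.2).1).comp u h1
  have hW : Module.finrank ℝ W < Module.finrank ℝ V := by
    apply Submodule.finrank_lt
    intro htop
    have : v ∈ W := htop ▸ Submodule.mem_top
    have : L v = 0 := this
    linarith
  have h0 := IH W hW h U' hU' (fun u hu => (hfW u hu).contDiffWithinAt)
  refine ⟨e.source ∩ N, Filter.inter_mem (e.open_source.mem_nhds hxe) (hNo.mem_nhds hxN), ?_⟩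
  refine measure_mono_null ?_ h0
  rintro _ ⟨y, ⟨⟨hys, hyN⟩, hgy, hfy⟩, rfl⟩
  have hyW : Φ y ∈ W := by
    show L (Φ y) = 0
    rw [hLΦ, hgy]
  have hsy : e.symm (Φ y) = y := e.left_inv hys
  have hyT : Φ y ∈ T := ⟨e.map_source hys, by show e.symm (Φ y) ∈ N; rwa [hsy]⟩
  refine ⟨⟨Φ y, hyW⟩, ⟨hyT, ?_⟩, ?_⟩
  · have h1 : ContDiffAt ℝ ∞ (fun u : W => e.symm (u : V)) ⟨Φ y, hyW⟩ :=
      (hsymm (Φ y) hyT).comp (⟨Φ y, hyW⟩ : W) W.subtypeL.contDiff.contDiffAt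
    have h2 : HasFDerivAt f (0 : V →L[ℝ] ℝ) (e.symm (Φ y)) := by
      rw [hsy, ← hfy]
      exact ((hfc y (hNsub _ hyN).1).differentiableAt (by simp)).hasFDerivAt
    have h3 := HasFDerivAt.comp (⟨Φ y, hyW⟩ : W) (f := fun u : W => e.symm (u : V)) h2
      (h1.differentiableAt (by simp)).hasFDerivAt
    have h4 := h3.fderiv
    rw [ContinuousLinearMap.zero_comp] at h4
    exact h4
  · show f (e.symm (Φ y)) = f y
    rw [hsy]

theorem sard_real (n : ℕ) : ∀ (V : Type*) [NormedAddCommGroup V] [NormedSpace ℝ V]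
    [FiniteDimensional ℝ V], Module.finrank ℝ V = n → ∀ (f : V → ℝ) (U : Set V), IsOpen U →
    ContDiffOn ℝ ∞ f U → volume (f '' {x ∈ U | fderiv ℝ f x = 0}) = 0 := by
  induction n using Nat.strong_induction_on with
  | _ n ih =>
  intro V _ _ _ hn f U hU hf
  let S : ℕ → Set V := fun k => {x ∈ U | ∀ j, 1 ≤ j → j ≤ k → iteratedFDeriv ℝ j f x = 0}
  have hflat : volume (f '' S n) = 0 := by
    have := sard_flat hU hf
    rwa [hn] at this
  let R : ℕ → Set V := fun k => {x ∈ S (k+1) | iteratedFDeriv ℝ (k+2) f x ≠ 0}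
  have hR : ∀ k, volume (f '' R k) = 0 := by
    intro k
    let μ := OuterMeasure.comap f (volume : Measure ℝ).toOuterMeasure
    have hμ : ∀ s, μ s = volume (f '' s) := fun s => rfl
    rw [← hμ]
    apply measure_null_of_locally_null
    intro x hx
    obtain ⟨m, hm⟩ : ∃ m, iteratedFDeriv ℝ (k+2) f x m ≠ 0 := by
      by_contra! h
      exact hx.2 (ContinuousMultilinearMap.ext h)
    let g : V → ℝ := fun y => iteratedFDeriv ℝ (k+1) f y (Fin.tail m)
    have hfc : ∀ y ∈ U, ContDiffAt ℝ ∞ (iteratedFDeriv ℝ (k+1) f) y := fun y hy =>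
      (hf.contDiffAt (hU.mem_nhds hy)).iteratedFDeriv_right (by exact_mod_cast le_top)
    let ev := ContinuousMultilinearMap.apply ℝ (fun _ : Fin (k+1) => V) ℝ (Fin.tail m)
    have hg : ContDiffOn ℝ ∞ g U := fun y hy =>
      (ev.contDiff.contDiffAt.comp y (hfc y hy)).contDiffWithinAt
    have hgx : fderiv ℝ g x ≠ 0 := by
      intro h0
      apply hm
      rw [iteratedFDeriv_succ_apply_left]
      have h1 := (ev.hasFDerivAt.comp x ((hfc x hx.1.1).differentiableAt (by simp)).hasFDerivAt).fderiv
      have h2 : ev.comp (fderiv ℝ (iteratedFDeriv ℝ (k+1) f) x) = 0 := h1.symm.trans h0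
      exact DFunLike.congr_fun h2 (m 0)
    obtain ⟨N, hN, hN0⟩ := sard_hyper hU hf hg hx.1.1 hgx
      (fun W hW h U' hU' hh => ih _ (hn ▸ hW) W rfl h U' hU' hh)
    refine ⟨R k ∩ N, Filter.inter_mem self_mem_nhdsWithin (mem_nhdsWithin_of_mem_nhds hN), ?_⟩
    rw [hμ]
    refine measure_mono_null (image_mono ?_) hN0
    rintro y ⟨hy, hyN⟩
    refine ⟨hyN, ?_, ?_⟩
    · show iteratedFDeriv ℝ (k+1) f y (Fin.tail m) = 0
      rw [hy.1.2 (k+1) (by omega) le_rfl]; rfl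
    · rw [← norm_eq_zero, ← norm_iteratedFDeriv_one, hy.1.2 1 le_rfl (by omega), norm_zero]
  have hsub : f '' {x ∈ U | fderiv ℝ f x = 0} ⊆ f '' S n ∪ ⋃ k, f '' R k := by
    rw [← image_iUnion, ← image_union]
    apply image_mono
    rintro x ⟨hxU, hx⟩
    by_cases hS : x ∈ S n
    · exact Or.inl hS
    · right
      have hex : ∃ j, 1 ≤ j ∧ iteratedFDeriv ℝ j f x ≠ 0 := by
        by_contra! h
        exact hS ⟨hxU, fun j hj _ => h j hj⟩
      classical
      obtain ⟨h1, h2⟩ := Nat.find_spec hex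
      have hne1 : Nat.find hex ≠ 1 := by
        intro h
        rw [h] at h2
        apply h2
        rw [← norm_eq_zero, norm_iteratedFDeriv_one, hx, norm_zero]
      obtain ⟨k, hk⟩ : ∃ k, Nat.find hex = k + 2 := ⟨Nat.find hex - 2, by omega⟩
      refine mem_iUnion.2 ⟨k, ⟨hxU, fun j hj hjk => ?_⟩, hk ▸ h2⟩
      by_contra hne
      exact Nat.find_min hex (m := j) (by omega) ⟨hj, hne⟩
  exact measure_mono_null hsub (measure_union_null hflat (measure_iUnion_null hR))

end SardAux

/-- Sard-type partition lemma: the compact set `𝒟′ ⊆ 𝒳 × E₀^⊥` can be partitioned into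
finitely many pieces `𝒟′₁, …, 𝒟′_m` with associated levels `ν_l ∈ (ν, 3ν/2)` such that for
every `(z, w)` in the closure of `𝒟′_l`, zero is a regular value of
`v ↦ F(z, w + v) − ν_l` on the closure of `O`. -/
theorem stmt4 {X E : Type*} [MetricSpace X] [CompactSpace X]
    [NormedAddCommGroup E] [InnerProductSpace ℝ E] [FiniteDimensional ℝ E]
    (E₀ : Submodule ℝ E)
    (O : Set E₀) (hObdd : Bornology.IsBounded O) (hOconv : Convex ℝ O) (hOopen : IsOpen O)
    (D' : Set (X × E₀ᗮ)) (hD'comp : IsCompact D')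
    (ν : ℝ) (hν : 0 < ν)
    (F : X → E → ℝ)
    (hFcont : Continuous fun p : X × E => F p.1 p.2)
    (hFsmooth : ∀ z, ContDiff ℝ (⊤ : ℕ∞) (F z))
    (hDcont : Continuous fun p : X × E => fderiv ℝ (F p.1) p.2) :
    ∃ m : ℕ, 1 ≤ m ∧
    ∃ (D : Fin m → Set (X × E₀ᗮ)) (νl : Fin m → ℝ),
      (Pairwise fun l l' => Disjoint (D l) (D l')) ∧
      (⋃ l, D l) = D' ∧
      (∀ l, νl l ∈ Ioo ν (3 * ν / 2)) ∧
      (∀ l, ∀ zw ∈ closure (D l), ∀ v ∈ closure O,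
        F zw.1 ((zw.2 : E) + (v : E)) = νl l →
          fderiv ℝ (fun v' : E₀ => F zw.1 ((zw.2 : E) + (v' : E))) v ≠ 0) := by
  have hcl : IsCompact (closure O) := hObdd.isCompact_closure
  have hfd : ∀ (zw : X × E₀ᗮ) (v : E₀),
      fderiv ℝ (fun v' : E₀ => F zw.1 ((zw.2 : E) + (v' : E))) v =
        (fderiv ℝ (F zw.1) ((zw.2 : E) + (v : E))).comp E₀.subtypeL := by
    intro zw v
    have h1 : HasFDerivAt (F zw.1) (fderiv ℝ (F zw.1) ((zw.2 : E) + (v : E)))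
        ((zw.2 : E) + (v : E)) :=
      ((hFsmooth zw.1).differentiable (by simp) _).hasFDerivAt
    have h2 : HasFDerivAt (fun v' : E₀ => (zw.2 : E) + (v' : E)) E₀.subtypeL v :=
      E₀.subtypeL.hasFDerivAt.const_add _
    exact (HasFDerivAt.comp v h1 h2).fderiv
  let G : ℝ → Set (X × E₀ᗮ) := fun c => {zw | ∀ v ∈ closure O,
        F zw.1 ((zw.2 : E) + (v : E)) = c →
          fderiv ℝ (fun v' : E₀ => F zw.1 ((zw.2 : E) + (v' : E))) v ≠ 0}
  have hadd : Continuous fun p : (X × E₀ᗮ) × E₀ => (p.1.1, ((p.1.2 : E) + (p.2 : E))) := by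
    fun_prop
  have hG : ∀ c, IsOpen (G c) := by
    intro c
    rw [isOpen_iff_mem_nhds]
    intro zw hzw
    refine hcl.eventually_forall_of_forall_eventually (P := fun (zw : X × E₀ᗮ) v =>
      F zw.1 ((zw.2 : E) + (v : E)) = c →
          fderiv ℝ (fun v' : E₀ => F zw.1 ((zw.2 : E) + (v' : E))) v ≠ 0) ?_
    intro v hv
    simp only [hfd]
    have hc1 : Continuous fun p : (X × E₀ᗮ) × E₀ => F p.1.1 ((p.1.2 : E) + (p.2 : E)) :=
      hFcont.comp hadd
    have hc2 : Continuous fun p : (X × E₀ᗮ) × E₀ =>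
        (fderiv ℝ (F p.1.1) ((p.1.2 : E) + (p.2 : E))).comp E₀.subtypeL :=
      (hDcont.comp hadd).clm_comp continuous_const
    by_cases h : F zw.1 ((zw.2 : E) + (v : E)) = c
    · have h' := hzw v hv h
      rw [hfd] at h'
      have := hc2.continuousAt.eventually_ne (x := (zw, v)) h'
      filter_upwards [this] with p hp _ using hp
    · have := hc1.continuousAt.eventually_ne (x := (zw, v)) h
      filter_upwards [this] with p hp hp' using absurd hp' hp
  have hreg : ∀ zw : X × E₀ᗮ, ∃ c ∈ Ioo ν (3 * ν / 2), zw ∈ G c := by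
    intro zw
    let f : E₀ → ℝ := fun v' : E₀ => F zw.1 ((zw.2 : E) + (v' : E))
    have hf : ContDiff ℝ (⊤ : ℕ∞) f :=
      (hFsmooth zw.1).comp (contDiff_const.add E₀.subtypeL.contDiff)
    have h0 := sard_real _ E₀ rfl f univ isOpen_univ hf.contDiffOn
    by_contra! hcon
    have hsub : Ioo ν (3 * ν / 2) ⊆ f '' {x ∈ univ | fderiv ℝ f x = 0} := by
      intro c hc
      by_contra hn
      apply hcon c hc
      intro v _ hvc hv0
      exact hn ⟨v, ⟨mem_univ _, hv0⟩, hvc⟩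
    have h1 := MeasureTheory.measure_mono_null hsub h0
    rw [Real.volume_Ioo, ENNReal.ofReal_eq_zero] at h1
    linarith
  choose c hc hcG using hreg
  have hr : ∀ zw : X × E₀ᗮ, ∃ r > 0, Metric.closedBall zw r ⊆ G (c zw) := fun zw =>
    Metric.nhds_basis_closedBall.mem_iff.1 ((hG _).mem_nhds (hcG zw))
  choose r hr0 hrG using hr
  obtain ⟨t, -, ht⟩ := hD'comp.elim_nhds_subcover (fun zw => Metric.ball zw (r zw))
    (fun zw _ => Metric.ball_mem_nhds zw (hr0 zw))
  rcases D'.eq_empty_or_nonempty with rfl | hne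
  · refine ⟨1, le_rfl, fun _ => ∅, fun _ => 5 * ν / 4, ?_, by simp, fun _ => ⟨by linarith, by linarith⟩,
      by simp⟩
    intro i j _
    exact disjoint_bot_left
  have hcard : 1 ≤ t.card := by
    obtain ⟨a, ha⟩ := hne
    obtain ⟨b, hb, -⟩ := mem_iUnion₂.1 (ht ha)
    exact Finset.card_pos.2 ⟨b, hb⟩
  let p : Fin t.card → X × E₀ᗮ := fun i => (t.equivFin.symm i : X × E₀ᗮ)
  let B : Fin t.card → Set (X × E₀ᗮ) := fun i => Metric.ball (p i) (r (p i))
  refine ⟨t.card, hcard, fun i => D' ∩ disjointed B i, fun i => c (p i), ?_, ?_,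
    fun i => hc _, ?_⟩
  · intro i j hij
    exact (disjoint_disjointed B hij).mono inter_subset_right inter_subset_right
  · rw [← inter_iUnion, iUnion_disjointed, inter_eq_left]
    intro a ha
    obtain ⟨b, hb, hab⟩ := mem_iUnion₂.1 (ht ha)
    refine mem_iUnion.2 ⟨t.equivFin ⟨b, hb⟩, ?_⟩
    simpa [B, p] using hab
  · intro i zw hzw
    have h1 : D' ∩ disjointed B i ⊆ Metric.closedBall (p i) (r (p i)) :=
      (inter_subset_right.trans (disjointed_le B i)).trans Metric.ball_subset_closedBall
    exact hrG _ (closure_minimal h1 Metric.isClosed_closedBall hzw)
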